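/- Let 0 < α < 1 and let ψ be a C¹ increasing function with ψ' never zero. The function u(x,t) = cos(πx) · E_α((1−π²)(ψ(t)−ψ(a))^α) satisfies the time-fractional diffusion equation ^C D^{α,ψ}_{a+} u(x,t) = ∂²u/∂x²(x,t) + u(x,t) together with the initial condition u(x,a) = cos(πx). -/

import Mathlib

open Real

noncomputable def psiInt (α : ℝ) (ψ : ℝ → ℝ) (a : ℝ) (f : ℝ → ℝ) (t : ℝ) : ℝ :=
  (1 / Real.Gamma α) * ∫ τ in a..t, deriv ψ τ * (ψ t - ψ τ) ^ (α - 1) * f τ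

noncomputable def caputo (α : ℝ) (ψ : ℝ → ℝ) (a : ℝ) (f : ℝ → ℝ) : ℝ → ℝ :=
  psiInt (1 - α) ψ a (fun τ => deriv f τ / deriv ψ τ)

noncomputable def ML (α z : ℝ) : ℝ := ∑' m : ℕ, z ^ m / Real.Gamma (m * α + 1)

/-!
In the time variable `w = ψ t - ψ a` the `ψ`-Caputo derivative becomes the classical Caputo
derivative based at `0`, which is `caputo α id 0`. Differentiating `E_α(c w^α)` gives
`c w^(α-1) E_{α,α}(c w^α)`, and the beta integral, applied term by term, shows that fractional
integration of order `1 - α` turns `w^(α-1) E_{α,α}(c w^α)` into `E_{α,1}(c w^α) = E_α(c w^α)`.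
So `E_α(c (ψ t - ψ a)^α)` is an eigenfunction of the `ψ`-Caputo derivative with eigenvalue `c`,
while `cos (ω x)` is one of `∂²/∂x² + r` with eigenvalue `r - ω²`; the choice `c = r - ω²` makes
their product a solution.
-/

open Set Filter MeasureTheory

/-- The two-parameter Mittag-Leffler function `E_{α,β}`, of which `ML α` is the case `β = 1`. It
expresses the derivative and the fractional integrals of `ML`. At the poles of `Gamma` the junk
values `Gamma = 0` and `z ^ m / 0 = 0` agree with the convention `1/Γ = 0`. -/
noncomputable def ML₂ (α β z : ℝ) : ℝ := ∑' m : ℕ, z ^ m / Gamma (m * α + β)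

lemma exp_neg_mul_rpow_le_Gamma {R s : ℝ} (hR : 0 ≤ R) (hs : 1 ≤ s) :
    exp (-R) * R ^ (s - 1) ≤ Gamma s := by
  have hint := GammaIntegral_convergent (zero_lt_one.trans_le hs)
  rw [Gamma_eq_integral (zero_lt_one.trans_le hs)]
  calc exp (-R) * R ^ (s - 1) = ∫ t in Ioi R, exp (-t) * R ^ (s - 1) := by
        rw [integral_mul_const, integral_exp_neg_Ioi]
    _ ≤ ∫ t in Ioi R, exp (-t) * t ^ (s - 1) := by
        refine setIntegral_mono_on ((integrableOn_exp_neg_Ioi R).mul_const _)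
          (hint.mono_set (Ioi_subset_Ioi hR)) measurableSet_Ioi fun t (ht : R < t) ↦ ?_
        gcongr
    _ ≤ ∫ t in Ioi 0, exp (-t) * t ^ (s - 1) := by
        refine setIntegral_mono_set hint ?_ (Ioi_subset_Ioi hR).eventuallyLE
        filter_upwards [ae_restrict_mem measurableSet_Ioi] with t (ht : 0 < t)
        simp only [Pi.zero_apply]
        positivity

lemma summable_ML₂ {α : ℝ} (hα : 0 < α) (β z : ℝ) :
    Summable fun m : ℕ ↦ z ^ m / Gamma (m * α + β) := by
  obtain ⟨R, hR, hzR⟩ : ∃ R : ℝ, 0 < R ∧ |z| < R ^ α :=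
    ⟨(|z| + 1) ^ α⁻¹, by positivity, by rw [rpow_inv_rpow (by positivity) hα.ne']; linarith⟩
  have hgeom : Summable fun m : ℕ ↦ exp R * R ^ (1 - β) * (|z| / R ^ α) ^ m :=
    (summable_geometric_of_lt_one (by positivity)
      ((div_lt_one (by positivity)).2 hzR)).mul_left _
  have htop : Tendsto (fun m : ℕ ↦ m * α + β) atTop atTop :=
    tendsto_atTop_add_const_right _ _ (tendsto_natCast_atTop_atTop.atTop_mul_const hα)
  refine hgeom.of_norm_bounded_eventually_nat ?_
  filter_upwards [htop.eventually_ge_atTop 1] with m hm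
  have hpow : R ^ (m * α + β - 1) = (R ^ α) ^ m / R ^ (1 - β) := by
    rw [← rpow_natCast, ← rpow_mul hR.le, ← rpow_sub hR]
    ring_nf
  calc ‖z ^ m / Gamma (m * α + β)‖ = |z| ^ m / Gamma (m * α + β) := by
        rw [norm_div, norm_pow, norm_eq_abs, norm_of_nonneg (Gamma_nonneg_of_nonneg (by linarith))]
    _ ≤ |z| ^ m / (exp (-R) * R ^ (m * α + β - 1)) := by
        gcongr
        exact exp_neg_mul_rpow_le_Gamma hR.le hm
    _ = exp R * R ^ (1 - β) * (|z| / R ^ α) ^ m := by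
        rw [hpow, exp_neg, div_pow]
        field_simp

lemma ML₂_one (α z : ℝ) : ML₂ α 1 z = ML α z := rfl

lemma ML_zero (α : ℝ) : ML α 0 = 1 := by
  rw [ML, tsum_eq_single 0 fun m hm ↦ by rw [zero_pow hm, zero_div]]
  simp

lemma tsum_deriv_ML_term {α : ℝ} (hα : 0 < α) (z : ℝ) :
    ∑' m : ℕ, m * z ^ (m - 1) / Gamma (m * α + 1) = ML₂ α α z / α := by
  have hterm (m : ℕ) : (m + 1 : ℕ) * z ^ (m + 1 - 1) / Gamma ((m + 1 : ℕ) * α + 1) =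
      z ^ m / Gamma (m * α + α) / α := by
    have hs : 0 < m * α + α := by positivity
    rw [Nat.add_sub_cancel, Nat.cast_add_one, add_one_mul (m : ℝ) α, Gamma_add_one hs.ne']
    field_simp [(Gamma_pos_of_pos hs).ne']
  rw [tsum_eq_zero_add' (by simpa only [hterm] using (summable_ML₂ hα α z).div_const α)]
  simp only [hterm, Nat.cast_zero, zero_mul, zero_div, zero_add, tsum_div_const, ML₂]

lemma hasDerivAt_ML {α : ℝ} (hα : 0 < α) (z : ℝ) : HasDerivAt (ML α) (ML₂ α α z / α) z := by
  rw [← tsum_deriv_ML_term hα]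
  have hz := abs_nonneg z
  refine hasDerivAt_tsum_of_isPreconnected (g := fun (m : ℕ) y ↦ y ^ m / Gamma (m * α + 1))
    (g' := fun (m : ℕ) y ↦ m * y ^ (m - 1) / Gamma (m * α + 1)) (y₀ := 0)
    (summable_ML₂ hα 1 (2 * (|z| + 1))) Metric.isOpen_ball
    (convex_ball 0 (|z| + 1)).isPreconnected
    (fun m y _ ↦ (hasDerivAt_pow m y).div_const _) (fun m y hy ↦ ?_)
    (Metric.mem_ball_self (by positivity)) (summable_ML₂ hα 1 0) (by simp)
  have hΓ : 0 < Gamma (m * α + 1) := Gamma_pos_of_pos (by positivity)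
  have hy' : ‖y‖ ≤ |z| + 1 := (mem_ball_zero_iff.1 hy).le
  have hm : (m : ℝ) ≤ 2 ^ m := mod_cast Nat.lt_two_pow_self.le
  rw [norm_div, norm_mul, norm_pow, norm_of_nonneg hΓ.le, norm_natCast, mul_pow]
  gcongr
  calc ‖y‖ ^ (m - 1) ≤ (|z| + 1) ^ (m - 1) := by gcongr
    _ ≤ (|z| + 1) ^ m := pow_le_pow_right₀ (by linarith) (Nat.sub_le _ _)

lemma hasDerivAt_ML_mul_rpow {α w : ℝ} (hα : 0 < α) (c : ℝ) (hw : 0 < w) :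
    HasDerivAt (fun x ↦ ML α (c * x ^ α)) (c * (w ^ (α - 1) * ML₂ α α (c * w ^ α))) w := by
  have hinner : HasDerivAt (fun x : ℝ ↦ c * x ^ α) (c * (α * w ^ (α - 1))) w :=
    (hasDerivAt_rpow_const (Or.inl hw.ne')).const_mul c
  refine ((hasDerivAt_ML hα _).comp w hinner).congr_deriv ?_
  field_simp

lemma integral_sub_rpow_mul_rpow {s γ T : ℝ} (hs : 0 < s) (hγ : 0 < γ) (hT : 0 < T) :
    ∫ w in 0..T, (T - w) ^ (γ - 1) * w ^ (s - 1) =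
      Gamma γ * (Gamma s / Gamma (s + γ) * T ^ (s + γ - 1)) := by
  have hcast : ∀ w ∈ uIcc 0 T, (((T - w) ^ (γ - 1) * w ^ (s - 1) : ℝ) : ℂ) =
      (w : ℂ) ^ ((s : ℂ) - 1) * ((T : ℂ) - w) ^ ((γ : ℂ) - 1) := by
    intro w hw
    rw [uIcc_of_le hT.le] at hw
    rw [mul_comm, Complex.ofReal_mul, Complex.ofReal_cpow hw.1,
      Complex.ofReal_cpow (sub_nonneg.2 hw.2)]
    push_cast
    rfl
  apply Complex.ofReal_injective
  rw [← intervalIntegral.integral_ofReal, intervalIntegral.integral_congr hcast,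
    Complex.betaIntegral_scaled _ _ hT,
    Complex.betaIntegral_eq_Gamma_mul_div _ _ (by simpa) (by simpa)]
  push_cast [← Complex.Gamma_ofReal, Complex.ofReal_cpow hT.le]
  ring

section PsiCalculus

variable {α a t : ℝ} {ψ f g : ℝ → ℝ}

lemma psiInt_congr (hat : a ≤ t) (hfg : EqOn f g (Ioo a t)) :
    psiInt α ψ a f t = psiInt α ψ a g t := by
  unfold psiInt
  congr 1
  exact intervalIntegral.integral_congr_Ioo_of_le hat fun τ hτ ↦ by simp only [hfg hτ]

lemma psiInt_const_mul (c : ℝ) :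
    psiInt α ψ a (fun τ ↦ c * f τ) t = c * psiInt α ψ a f t := by
  simp only [psiInt, mul_left_comm _ c, intervalIntegral.integral_const_mul]

lemma caputo_const_mul (c : ℝ) :
    caputo α ψ a (fun τ ↦ c * f τ) t = c * caputo α ψ a f t := by
  simp only [caputo, deriv_const_mul_field, mul_div_assoc, psiInt_const_mul]

lemma psiInt_id (T : ℝ) :
    psiInt α id 0 f T = 1 / Gamma α * ∫ w in 0..T, (T - w) ^ (α - 1) * f w := by
  simp only [psiInt, deriv_id, one_mul, id_eq]

lemma psiInt_comp_sub (hat : a ≤ t) (hψ : ContinuousOn ψ (Icc a t))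
    (hψ' : ∀ τ ∈ Ioo a t, 0 < deriv ψ τ) :
    psiInt α ψ a (fun τ ↦ g (ψ τ - ψ a)) t = psiInt α id 0 g (ψ t - ψ a) := by
  have hsubst := intervalIntegral.integral_deriv_smul_comp_of_deriv_nonneg
    (a := a) (b := t) (f := fun τ ↦ ψ τ - ψ a) (f' := deriv ψ)
    (g := fun w ↦ (ψ t - ψ a - w) ^ (α - 1) * g w)
    (by rw [uIcc_of_le hat]; exact hψ.sub continuousOn_const)
    (by
      rw [min_eq_left hat, max_eq_right hat]
      exact fun τ hτ ↦
        (differentiableAt_of_deriv_ne_zero (hψ' τ hτ).ne').hasDerivAt.sub_const _)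
    (by rw [min_eq_left hat, max_eq_right hat]; exact fun τ hτ ↦ (hψ' τ hτ).le)
  rw [sub_self] at hsubst
  rw [psiInt_id, ← hsubst]
  simp only [psiInt, Function.comp_apply, smul_eq_mul, sub_sub_sub_cancel_right, mul_assoc]

lemma caputo_comp_sub (hat : a ≤ t) (hψ : ContinuousOn ψ (Icc a t))
    (hψ' : ∀ τ ∈ Ioo a t, 0 < deriv ψ τ) (hg : DifferentiableOn ℝ g (Ioo 0 (ψ t - ψ a))) :
    caputo α ψ a (fun τ ↦ g (ψ τ - ψ a)) t = caputo α id 0 g (ψ t - ψ a) := by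
  have hmono : StrictMonoOn ψ (Icc a t) :=
    strictMonoOn_of_deriv_pos (convex_Icc a t) hψ (by rwa [interior_Icc])
  have hchain : EqOn (fun τ ↦ deriv (fun s ↦ g (ψ s - ψ a)) τ / deriv ψ τ)
      (fun τ ↦ deriv g (ψ τ - ψ a)) (Ioo a t) := by
    intro τ hτ
    have hmem : ψ τ - ψ a ∈ Ioo 0 (ψ t - ψ a) :=
      ⟨sub_pos.2 (hmono (left_mem_Icc.2 hat) (Ioo_subset_Icc_self hτ) hτ.1),
        sub_lt_sub_right (hmono (Ioo_subset_Icc_self hτ) (right_mem_Icc.2 hat) hτ.2) _⟩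
    have hgτ := (hg.differentiableAt (isOpen_Ioo.mem_nhds hmem)).hasDerivAt
    have hψτ := (differentiableAt_of_deriv_ne_zero (hψ' τ hτ).ne').hasDerivAt
    have hcomp : HasDerivAt (fun s ↦ g (ψ s - ψ a)) (deriv g (ψ τ - ψ a) * deriv ψ τ) τ :=
      hgτ.comp τ (hψτ.sub_const (ψ a))
    dsimp only
    rw [hcomp.deriv, mul_div_cancel_right₀ _ (hψ' τ hτ).ne']
  rw [caputo, psiInt_congr hat hchain, psiInt_comp_sub hat hψ hψ', caputo]
  simp only [deriv_id, div_one]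

end PsiCalculus

section ClassicalKernel

variable {α γ T : ℝ}

lemma psiInt_id_tsum_rpow {ι : Type*} [Countable ι] (hγ : 0 < γ) (hT : 0 < T) {c s : ι → ℝ}
    (hs : ∀ k, 0 < s k)
    (hsum : Summable fun k ↦ c k * (Gamma (s k) / Gamma (s k + γ) * T ^ (s k + γ - 1))) :
    psiInt γ id 0 (fun w ↦ ∑' k, c k * w ^ (s k - 1)) T =
      ∑' k, c k * (Gamma (s k) / Gamma (s k + γ) * T ^ (s k + γ - 1)) := by
  have hΓγ := Gamma_pos_of_pos hγ
  have hpos (k : ι) : 0 < Gamma (s k) / Gamma (s k + γ) * T ^ (s k + γ - 1) := by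
    have h₁ := Gamma_pos_of_pos (hs k)
    have h₂ := Gamma_pos_of_pos (add_pos (hs k) hγ)
    positivity
  have hbeta (k : ι) : ∫ w in Ioc 0 T, (T - w) ^ (γ - 1) * w ^ (s k - 1) =
      Gamma γ * (Gamma (s k) / Gamma (s k + γ) * T ^ (s k + γ - 1)) := by
    rw [← intervalIntegral.integral_of_le hT.le, integral_sub_rpow_mul_rpow (hs k) hγ hT]
  have hint (k : ι) :
      IntegrableOn (fun w ↦ c k * ((T - w) ^ (γ - 1) * w ^ (s k - 1))) (Ioc 0 T) :=
    (Integrable.of_integral_ne_zero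
      (by rw [hbeta]; exact (mul_pos hΓγ (hpos k)).ne')).const_mul _
  have hnorm (k : ι) : ∫ w in Ioc 0 T, ‖c k * ((T - w) ^ (γ - 1) * w ^ (s k - 1))‖ =
      Gamma γ * ‖c k * (Gamma (s k) / Gamma (s k + γ) * T ^ (s k + γ - 1))‖ := by
    have habs : EqOn (fun w ↦ ‖c k * ((T - w) ^ (γ - 1) * w ^ (s k - 1))‖)
        (fun w ↦ ‖c k‖ * ((T - w) ^ (γ - 1) * w ^ (s k - 1))) (Ioc 0 T) := fun w hw ↦ by
      have h₁ : 0 ≤ T - w := sub_nonneg.2 hw.2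
      have h₂ : 0 < w := hw.1
      dsimp only
      rw [norm_mul, norm_of_nonneg (by positivity : 0 ≤ (T - w) ^ (γ - 1) * w ^ (s k - 1))]
    rw [setIntegral_congr_fun measurableSet_Ioc habs, integral_const_mul, hbeta, norm_mul,
      norm_of_nonneg (hpos k).le, mul_left_comm]
  have hswap := integral_tsum_of_summable_integral_norm hint
    (by simpa only [hnorm] using hsum.norm.mul_left (Gamma γ))
  simp only [integral_const_mul, hbeta, mul_left_comm _ (Gamma γ), tsum_mul_left] at hswap
  rw [psiInt_id, intervalIntegral.integral_of_le hT.le]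
  simp only [← tsum_mul_left, mul_left_comm _ (c _)]
  rw [← hswap]
  field_simp

lemma psiInt_id_rpow_mul_ML₂ {β : ℝ} (hα : 0 < α) (hβ : 0 < β) (hγ : 0 < γ) (hT : 0 < T)
    (c : ℝ) :
    psiInt γ id 0 (fun w ↦ w ^ (β - 1) * ML₂ α β (c * w ^ α)) T =
      T ^ (β + γ - 1) * ML₂ α (β + γ) (c * T ^ α) := by
  have hs (k : ℕ) : 0 < k * α + β := by positivity
  have hseries : EqOn (fun w ↦ w ^ (β - 1) * ML₂ α β (c * w ^ α))
      (fun w ↦ ∑' k : ℕ, c ^ k / Gamma (k * α + β) * w ^ (k * α + β - 1)) (Ioo 0 T) := by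
    intro w hw
    dsimp only [ML₂]
    rw [← tsum_mul_left]
    congr! 2 with k
    rw [add_sub_assoc, rpow_add hw.1, mul_pow, mul_comm (k : ℝ), rpow_mul_natCast hw.1.le]
    ring
  have hterm (k : ℕ) : c ^ k / Gamma (k * α + β) *
      (Gamma (k * α + β) / Gamma (k * α + β + γ) * T ^ (k * α + β + γ - 1)) =
        T ^ (β + γ - 1) * ((c * T ^ α) ^ k / Gamma (k * α + (β + γ))) := by
    rw [add_assoc, add_sub_assoc, rpow_add hT, mul_pow, mul_comm (k : ℝ),
      rpow_mul_natCast hT.le]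
    field_simp [(Gamma_pos_of_pos (hs k)).ne']
  rw [psiInt_congr hT.le hseries, psiInt_id_tsum_rpow hγ hT hs
    (by simpa only [hterm] using (summable_ML₂ hα (β + γ) (c * T ^ α)).mul_left _)]
  simp only [hterm, tsum_mul_left, ML₂]

lemma caputo_id_ML (hα : 0 < α) (hα1 : α < 1) (hT : 0 < T) (c : ℝ) :
    caputo α id 0 (fun w ↦ ML α (c * w ^ α)) T = c * ML α (c * T ^ α) := by
  have hderiv : EqOn (fun w ↦ deriv (fun x ↦ ML α (c * x ^ α)) w / deriv id w)
      (fun w ↦ c * (w ^ (α - 1) * ML₂ α α (c * w ^ α))) (Ioo 0 T) := fun w hw ↦ by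
    simp only [deriv_id, div_one, (hasDerivAt_ML_mul_rpow hα c hw.1).deriv]
  rw [caputo, psiInt_congr hT.le hderiv, psiInt_const_mul,
    psiInt_id_rpow_mul_ML₂ hα hα (sub_pos.2 hα1) hT, add_sub_cancel, sub_self, rpow_zero,
    one_mul, ML₂_one]

end ClassicalKernel

lemma caputo_ML {α a t : ℝ} {ψ : ℝ → ℝ} (hα : 0 < α) (hα1 : α < 1) (hat : a < t)
    (hψ : ContinuousOn ψ (Icc a t)) (hψ' : ∀ τ ∈ Ioo a t, 0 < deriv ψ τ) (c : ℝ) :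
    caputo α ψ a (fun τ ↦ ML α (c * (ψ τ - ψ a) ^ α)) t = c * ML α (c * (ψ t - ψ a) ^ α) := by
  have hmono : StrictMonoOn ψ (Icc a t) :=
    strictMonoOn_of_deriv_pos (convex_Icc a t) hψ (by rwa [interior_Icc])
  have hT : 0 < ψ t - ψ a :=
    sub_pos.2 (hmono (left_mem_Icc.2 hat.le) (right_mem_Icc.2 hat.le) hat)
  rw [caputo_comp_sub (g := fun w ↦ ML α (c * w ^ α)) hat.le hψ hψ' fun w hw ↦
    (hasDerivAt_ML_mul_rpow hα c hw.1).differentiableAt.differentiableWithinAt]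
  exact caputo_id_ML hα hα1 hT c

lemma deriv_deriv_cos_mul (ω x : ℝ) :
    deriv (deriv fun y ↦ cos (ω * y)) x = -ω ^ 2 * cos (ω * x) := by
  have h := congrFun (iteratedDeriv_comp_const_mul (n := 2) contDiff_cos ω) x
  rw [iteratedDeriv_succ, iteratedDeriv_one] at h
  rw [h]
  simp [iteratedDeriv_succ]

theorem stmt8_general {a : ℝ} {ψ : ℝ → ℝ} (hψ : ContinuousOn ψ (Ici a))
    (hψ' : ∀ τ ∈ Ioi a, 0 < deriv ψ τ) {α : ℝ} (hα : 0 < α) (hα1 : α < 1) (ω r : ℝ)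
    {u : ℝ → ℝ → ℝ}
    (hu : ∀ x t, u x t = cos (ω * x) * ML α ((r - ω ^ 2) * (ψ t - ψ a) ^ α)) :
    (∀ x t, a < t →
        caputo α ψ a (fun s ↦ u x s) t = deriv (deriv fun y ↦ u y t) x + r * u x t) ∧
      ∀ x, u x a = cos (ω * x) := by
  refine ⟨fun x t hat ↦ ?_, fun x ↦ ?_⟩
  · have htime := caputo_ML hα hα1 hat (hψ.mono Icc_subset_Ici_self)
      (fun τ hτ ↦ hψ' τ hτ.1) (r - ω ^ 2)
    simp only [hu, caputo_const_mul, htime, deriv_mul_const_field', deriv_mul_const_field,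
      deriv_deriv_cos_mul]
    ring
  · rw [hu, sub_self, zero_rpow hα.ne', mul_zero, ML_zero, mul_one]

theorem stmt8 (a : ℝ) (ψ : ℝ → ℝ) (hψ : ContDiff ℝ 1 ψ)
    (hmono : StrictMono ψ) (hψ' : ∀ x, deriv ψ x ≠ 0)
    (α : ℝ) (hα : 0 < α) (hα1 : α < 1)
    (u : ℝ → ℝ → ℝ)
    (hu : ∀ x t, u x t = Real.cos (π * x) * ML α ((1 - π ^ 2) * (ψ t - ψ a) ^ α)) :
    (∀ x t, a < t →
        caputo α ψ a (fun s => u x s) t =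
          deriv (deriv (fun y => u y t)) x + u x t) ∧
      ∀ x, u x a = Real.cos (π * x) := by
  simpa only [one_mul] using stmt8_general hψ.continuous.continuousOn
    (fun τ _ ↦ hmono.monotone.deriv_nonneg.lt_of_ne' (hψ' τ)) hα hα1 π 1 hu
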